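/- arXiv:1810.08022 — 2 statements merged into one kernel-verified Lean document; each statement's English description precedes it below -/
import Mathlib

section
/- For all integers n ≥ 2 and k, the following identity holds in ℚ[x][q,q⁻¹]: (n−1)·d_{n,k}(x,q)·d_{n−2,k}(x+2,q) = (x+n)·d_{n−1,k}(x,q)·d_{n−1,k}(x+2,q) − (x+1)·d_{n−1,k+1}(x+1,q)·d_{n−1,k−1}(x+1,q). -/
open Polynomial LaurentPolynomial Finset

noncomputable section

/-- The ring ℚ[x][q,q⁻¹]: Laurent polynomials in `q` over ℚ[x]. -/
abbrev RQ : Type := LaurentPolynomial (Polynomial ℚ)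

/-- The polynomial binomial coefficient binom(y, m) = y(y-1)⋯(y-m+1)/m!. -/
noncomputable def binomQ (y : Polynomial ℚ) (m : ℕ) : Polynomial ℚ :=
  Polynomial.C ((m.factorial : ℚ))⁻¹ * ∏ t ∈ Finset.range m, (y - (t : Polynomial ℚ))

/-- a_m(q) ∈ ℚ[x][q,q⁻¹]: a_m = ∑_{l=0}^{m-1}(-q)^l for m > 0, a_0 = 0,
a_m = -∑_{l=1}^{-m}(-q)^{-l} for m < 0.  Here q = T 1. -/
noncomputable def aQ (m : ℤ) : RQ :=
  if 0 < m then ∑ l ∈ Finset.range m.toNat, (-1 : RQ) ^ l * LaurentPolynomial.T (l : ℤ)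
  else -∑ l ∈ Finset.range (-m).toNat, (-1 : RQ) ^ (l + 1) * LaurentPolynomial.T (-(l + 1 : ℤ))

/-- The matrix D_{n,k}(x+c, q) (1-based (i,j) entry binom(x+c+i+j-2, j-1)·a_{j-i+k}(q)). -/
noncomputable def Dmat (n : ℕ) (k c : ℤ) : Matrix (Fin n) (Fin n) RQ :=
  Matrix.of fun i j =>
    LaurentPolynomial.C
      (binomQ (Polynomial.X + Polynomial.C (c : ℚ) + ((i : ℕ) : Polynomial ℚ)
        + ((j : ℕ) : Polynomial ℚ)) (j : ℕ)) *
    aQ ((j : ℤ) - (i : ℤ) + k)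

/-- d_{n,k}(x+c, q) := det D_{n,k}(x+c, q). -/
noncomputable def dd (n : ℕ) (k c : ℤ) : RQ := (Dmat n k c).det

/-!
Multiplying column `j` of the binomial matrix by `j!` replaces its entries by
`(y + i)_j * b (j - i + k)`, where `y = x + 1` and `(y)_j` is the rising factorial. Since
`(y + i)_(j+1) = (y + i) * (y + 1 + i)_j`, each minor obtained by deleting extreme rows and columns
is a matrix of the same shape, up to factors `y + i` on its rows, with `y` and `k` shifted. The
Desnanot–Jacobi identity therefore becomes the condensation formula multiplied by
`(y + 1) ⋯ (y + m)`, which can be cancelled when `y` is an indeterminate. Dividing the columns by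
`j!` again produces the coefficient `m + 1`.
-/

open Matrix

section Jacobi

variable {R : Type*} [CommRing R]

theorem det_mul_det_toBlocks₁₁_adjugate {p n : Type*} [Fintype p] [DecidableEq p] [Fintype n]
    [DecidableEq n] (A : Matrix (p ⊕ n) (p ⊕ n) R) :
    A.det * A.adjugate.toBlocks₁₁.det = A.det ^ Fintype.card p * A.toBlocks₂₂.det := by
  have hadj := A.mul_adjugate
  rw [← fromBlocks_toBlocks A, ← fromBlocks_toBlocks (adjugate _), fromBlocks_multiply,
    ← fromBlocks_one, fromBlocks_smul, fromBlocks_inj, fromBlocks_toBlocks] at hadj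
  obtain ⟨h₁₁, -, h₂₁, -⟩ := hadj
  have hmul : A * fromBlocks A.adjugate.toBlocks₁₁ 0 A.adjugate.toBlocks₂₁ 1 =
      fromBlocks (A.det • 1) A.toBlocks₁₂ 0 A.toBlocks₂₂ := by
    conv_lhs => enter [1]; rw [← fromBlocks_toBlocks A]
    rw [fromBlocks_multiply, h₁₁, h₂₁]
    simp
  simpa using congrArg det hmul

/-- Jacobi's theorem on complementary minors. -/
theorem det_toBlocks₁₁_adjugate {p n : Type*} [Fintype p] [DecidableEq p] [Nonempty p] [Fintype n]
    [DecidableEq n] (A : Matrix (p ⊕ n) (p ⊕ n) R) :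
    A.adjugate.toBlocks₁₁.det = A.det ^ (Fintype.card p - 1) * A.toBlocks₂₂.det := by
  let U := mvPolynomialX (p ⊕ n) (p ⊕ n) ℤ
  have hU : U.adjugate.toBlocks₁₁.det = U.det ^ (Fintype.card p - 1) * U.toBlocks₂₂.det := by
    refine mul_left_cancel₀ (det_mvPolynomialX_ne_zero (p ⊕ n) ℤ) ?_
    rw [det_mul_det_toBlocks₁₁_adjugate, ← mul_assoc, mul_pow_sub_one Fintype.card_ne_zero]
  let φ := MvPolynomial.aeval (R := ℤ) fun ij : (p ⊕ n) × (p ⊕ n) ↦ A ij.1 ij.2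
  have hφ : φ.mapMatrix U = A := mvPolynomialX_mapMatrix_aeval ℤ A
  have toBlocks₁₁_map (M : Matrix (p ⊕ n) (p ⊕ n) (MvPolynomial ((p ⊕ n) × (p ⊕ n)) ℤ)) :
      φ.mapMatrix M.toBlocks₁₁ = (φ.mapMatrix M).toBlocks₁₁ := rfl
  have toBlocks₂₂_map : φ.mapMatrix U.toBlocks₂₂ = (φ.mapMatrix U).toBlocks₂₂ := rfl
  simpa only [map_mul, map_pow, AlgHom.map_det, toBlocks₁₁_map, toBlocks₂₂_map,
    AlgHom.map_adjugate, hφ] using congrArg φ hU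

/-- The equivalence listing the two extreme indices first, then the inner ones in order; it turns
the minor of the two extreme rows and columns into a leading block. -/
def finExtremeInnerEquiv (m : ℕ) : Fin 2 ⊕ Fin m ≃ Fin (m + 2) :=
  Equiv.ofBijective (Sum.elim ![0, Fin.last (m + 1)] fun i ↦ i.succ.castSucc) <|
    (Fintype.bijective_iff_injective_and_card _).mpr
      ⟨Function.Injective.sumElim (injective_pair_iff_ne.mpr Fin.last_pos.ne)
        ((Fin.castSucc_injective _).comp (Fin.succ_injective _))
        (Fin.forall_fin_two.mpr ⟨fun i ↦ (Fin.castSucc_pos i.succ_pos).ne,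
          fun i ↦ (Fin.castSucc_lt_last i.succ).ne'⟩), by simp [add_comm]⟩

theorem desnanot_jacobi {m : ℕ} (A : Matrix (Fin (m + 2)) (Fin (m + 2)) R) :
    A.det * (A.submatrix (fun i : Fin m ↦ i.succ.castSucc) fun i ↦ i.succ.castSucc).det =
      (A.submatrix Fin.castSucc Fin.castSucc).det * (A.submatrix Fin.succ Fin.succ).det -
        (A.submatrix Fin.succ Fin.castSucc).det * (A.submatrix Fin.castSucc Fin.succ).det := by
  set e := finExtremeInnerEquiv m
  have hjacobi := det_toBlocks₁₁_adjugate (A.submatrix e e)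
  have hinner : (A.submatrix e e).toBlocks₂₂ =
      A.submatrix (fun i : Fin m ↦ i.succ.castSucc) fun i ↦ i.succ.castSucc := rfl
  have hcorner : (A.adjugate.submatrix e e).toBlocks₁₁ =
      !![A.adjugate 0 0, A.adjugate 0 (Fin.last _);
        A.adjugate (Fin.last _) 0, A.adjugate (Fin.last _) (Fin.last _)] := by
    ext i j
    fin_cases i <;> fin_cases j <;> rfl
  rw [adjugate_submatrix_equiv_self, hcorner, hinner, det_submatrix_equiv_self, det_fin_two_of,
    Fintype.card_fin, pow_one] at hjacobi
  rw [← hjacobi]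
  have hsign : (-1 : R) ^ (m + 1) * (-1) ^ (m + 1) = 1 := by rw [← mul_pow]; simp
  simp only [adjugate_fin_succ_eq_det_submatrix, Fin.succAbove_zero, Fin.succAbove_last,
    Fin.val_zero, Fin.val_last, add_zero, zero_add, pow_add _ (m + 1) (m + 1), pow_zero, one_mul]
  linear_combination ((A.submatrix Fin.castSucc Fin.castSucc).det *
    (A.submatrix Fin.succ Fin.succ).det - (A.submatrix Fin.succ Fin.castSucc).det *
    (A.submatrix Fin.castSucc Fin.succ).det) * hsign

end Jacobi

section Pochhammer

section CommSemiring

variable {R S : Type*} [CommSemiring R] [CommSemiring S]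

theorem eval_ascPochhammer_succ_left (n : ℕ) (y : R) :
    (ascPochhammer R (n + 1)).eval y = y * (ascPochhammer R n).eval (y + 1) := by
  simp [ascPochhammer_succ_left, eval_comp]

theorem prod_fin_add_eq_eval_ascPochhammer (n : ℕ) (y : R) :
    ∏ i : Fin n, (y + (i : ℕ)) = (ascPochhammer R n).eval y := by
  induction n with
  | zero => simp
  | succ n ih => rw [Fin.prod_univ_castSucc, ascPochhammer_succ_eval, ← ih]; simp

theorem map_eval_ascPochhammer (f : R →+* S) (n : ℕ) (y : R) :
    f ((ascPochhammer R n).eval y) = (ascPochhammer S n).eval (f y) := by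
  rw [← ascPochhammer_map f, eval_map, eval₂_at_apply]

end CommSemiring

variable {R S : Type*} [CommRing R] [CommRing S]

theorem isRegular_eval_ascPochhammer_X_add_C (n : ℕ) (r : R) :
    IsRegular ((ascPochhammer R[X] n).eval (Polynomial.X + Polynomial.C r)) := by
  induction n with
  | zero => simpa using isRegular_one
  | succ n ih =>
    rw [ascPochhammer_succ_eval, add_assoc, ← map_natCast Polynomial.C, ← map_add]
    exact ih.mul (monic_X_add_C _).isRegular

/-- The matrix with entries `(y + i)_j b_{j - i + k}`, where `(y)_j` is the rising factorial.
With `y = x + 1` it is `binomialMatrix b n k x` with column `j` multiplied by `j!`, which makes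
sense without division. -/
def pochhammerMatrix (b : ℤ → R) (n : ℕ) (k : ℤ) (y : R) : Matrix (Fin n) (Fin n) R :=
  of fun i j ↦ (ascPochhammer R j).eval (y + (i : ℕ)) * b ((j : ℤ) - (i : ℤ) + k)

theorem map_det_pochhammerMatrix (f : R →+* S) (b : ℤ → R) (n : ℕ) (k : ℤ) (y : R) :
    f (pochhammerMatrix b n k y).det = (pochhammerMatrix (f ∘ b) n k (f y)).det := by
  rw [RingHom.map_det]
  congr 1
  ext i j
  simp [pochhammerMatrix, map_eval_ascPochhammer]

variable (b : ℤ → R) (n : ℕ) (k : ℤ) (y : R)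

theorem pochhammerMatrix_submatrix_castSucc_castSucc :
    (pochhammerMatrix b (n + 1) k y).submatrix Fin.castSucc Fin.castSucc =
      pochhammerMatrix b n k y := rfl

theorem pochhammerMatrix_submatrix_succ_left {p : Type*} (f : p → Fin (n + 1)) :
    (pochhammerMatrix b (n + 1) k y).submatrix Fin.succ f =
      (pochhammerMatrix b (n + 1) (k - 1) (y + 1)).submatrix Fin.castSucc f := by
  ext i j
  simp only [pochhammerMatrix, submatrix_apply, of_apply, Fin.val_succ, Fin.val_castSucc,
    Nat.cast_add, Nat.cast_one]
  ring_nf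

theorem det_pochhammerMatrix_submatrix_castSucc_succ :
    ((pochhammerMatrix b (n + 1) k y).submatrix Fin.castSucc Fin.succ).det =
      (ascPochhammer R n).eval y * (pochhammerMatrix b n (k + 1) (y + 1)).det := by
  rw [← prod_fin_add_eq_eval_ascPochhammer, ← det_mul_column]
  congr 1
  ext i j
  simp only [pochhammerMatrix, submatrix_apply, of_apply, Fin.val_succ, Fin.val_castSucc,
    Nat.cast_add, Nat.cast_one, eval_ascPochhammer_succ_left]
  ring_nf

theorem det_pochhammerMatrix_submatrix_succ_succ :
    ((pochhammerMatrix b (n + 1) k y).submatrix Fin.succ Fin.succ).det =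
      (ascPochhammer R n).eval (y + 1) * (pochhammerMatrix b n k (y + 2)).det := by
  rw [pochhammerMatrix_submatrix_succ_left, det_pochhammerMatrix_submatrix_castSucc_succ,
    sub_add_cancel, add_assoc, one_add_one_eq_two]

theorem eval_ascPochhammer_mul_pochhammerMatrix_condensation :
    (ascPochhammer R n).eval (y + 1) *
        ((pochhammerMatrix b (n + 2) k y).det * (pochhammerMatrix b n k (y + 2)).det) =
      (ascPochhammer R n).eval (y + 1) *
        ((y + 1 + n) * (pochhammerMatrix b (n + 1) k y).det *
            (pochhammerMatrix b (n + 1) k (y + 2)).det -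
          y * (pochhammerMatrix b (n + 1) (k + 1) (y + 1)).det *
            (pochhammerMatrix b (n + 1) (k - 1) (y + 1)).det) := by
  have inner : ((pochhammerMatrix b (n + 2) k y).submatrix (fun i : Fin n ↦ i.succ.castSucc)
      fun i ↦ i.succ.castSucc).det =
      (ascPochhammer R n).eval (y + 1) * (pochhammerMatrix b n k (y + 2)).det :=
    det_pochhammerMatrix_submatrix_succ_succ b n k y
  have hcond := desnanot_jacobi (pochhammerMatrix b (n + 2) k y)
  rw [inner, det_pochhammerMatrix_submatrix_succ_succ, det_pochhammerMatrix_submatrix_castSucc_succ,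
    pochhammerMatrix_submatrix_succ_left, pochhammerMatrix_submatrix_castSucc_castSucc,
    pochhammerMatrix_submatrix_castSucc_castSucc, ascPochhammer_succ_eval,
    eval_ascPochhammer_succ_left] at hcond
  linear_combination hcond

theorem pochhammerMatrix_condensation :
    (pochhammerMatrix b (n + 2) k y).det * (pochhammerMatrix b n k (y + 2)).det =
      (y + 1 + n) * (pochhammerMatrix b (n + 1) k y).det *
          (pochhammerMatrix b (n + 1) k (y + 2)).det -
        y * (pochhammerMatrix b (n + 1) (k + 1) (y + 1)).det *
          (pochhammerMatrix b (n + 1) (k - 1) (y + 1)).det := by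
  -- The factor to cancel may be a zero divisor at `y`, but it is regular at `X` in `R[X]`.
  have generic := (isRegular_eval_ascPochhammer_X_add_C n (1 : R)).left <|
    eval_ascPochhammer_mul_pochhammerMatrix_condensation (Polynomial.C ∘ b) n k Polynomial.X
  have hb : evalRingHom y ∘ Polynomial.C ∘ b = b := by ext; simp
  have hy : evalRingHom y Polynomial.X = y := eval_X
  simpa only [map_mul, map_sub, map_add, map_one, map_ofNat, map_natCast,
    map_det_pochhammerMatrix, hb, hy] using congrArg (evalRingHom y) generic

end Pochhammer

section Binomial

variable {R : Type*} [CommRing R] [BinomialRing R] (b : ℤ → R)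

/-- The matrix with entries `binom(x + i + j, j) b_{j - i + k}`; rows and columns are indexed from
`0`, and `b` generalizes the sequence `aQ` in `Dmat`. -/
def binomialMatrix (n : ℕ) (k : ℤ) (x : R) : Matrix (Fin n) (Fin n) R :=
  of fun i j ↦ Ring.choose (x + (i : ℕ) + (j : ℕ)) (j : ℕ) * b ((j : ℤ) - (i : ℤ) + k)

theorem factorial_mul_choose_add_natCast (x : R) (n : ℕ) :
    (n.factorial : R) * Ring.choose (x + n) n = (ascPochhammer R n).eval (x + 1) := by
  rw [Ring.choose, add_sub_cancel_right, ← nsmul_eq_mul,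
    Ring.factorial_nsmul_multichoose_eq_ascPochhammer, ascPochhammer_smeval_eq_eval]

theorem prod_range_sub_natCast_eq_factorial_mul_choose (x : R) (n : ℕ) :
    ∏ t ∈ range n, (x - t) = (n.factorial : R) * Ring.choose x n := by
  rw [← nsmul_eq_mul, ← Ring.descPochhammer_eq_factorial_smul_choose, ← aeval_eq_smeval,
    aeval_def, ← eval_map, algebraMap_int_eq, descPochhammer_map,
    descPochhammer_eval_eq_prod_range]

theorem prod_factorial_mul_det_binomialMatrix (n : ℕ) (k : ℤ) (x : R) :
    ((∏ j ∈ range n, j.factorial : ℕ) : R) * (binomialMatrix b n k x).det =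
      (pochhammerMatrix b n k (x + 1)).det := by
  rw [← Fin.prod_univ_eq_prod_range, Nat.cast_prod, ← det_mul_row]
  congr 1
  ext i j
  simp only [binomialMatrix, pochhammerMatrix, of_apply, ← mul_assoc,
    factorial_mul_choose_add_natCast, add_right_comm]

theorem prod_range_factorial_mul_prod_range_factorial (n : ℕ) :
    (∏ j ∈ range (n + 2), j.factorial) * ∏ j ∈ range n, j.factorial =
      (∏ j ∈ range (n + 1), j.factorial) ^ 2 * (n + 1) := by
  rw [prod_range_succ, prod_range_succ, Nat.factorial_succ]
  ring

theorem statement2_general (m : ℕ) (k : ℤ) (x : R) :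
    ((m : R) + 1) * (binomialMatrix b (m + 2) k x).det * (binomialMatrix b m k (x + 2)).det =
      (x + ((m + 2 : ℕ) : R)) * (binomialMatrix b (m + 1) k x).det *
          (binomialMatrix b (m + 1) k (x + 2)).det -
        (x + 1) * (binomialMatrix b (m + 1) (k + 1) (x + 1)).det *
          (binomialMatrix b (m + 1) (k - 1) (x + 1)).det := by
  have := BinomialRing.toIsAddTorsionFree (R := R)
  have factorials_ne_zero : (∏ j ∈ range (m + 1), j.factorial) ^ 2 ≠ 0 :=
    pow_ne_zero 2 <| prod_ne_zero_iff.mpr fun j _ ↦ j.factorial_ne_zero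
  refine nsmul_right_injective factorials_ne_zero ?_
  have hfactorials := congrArg (Nat.cast : ℕ → R) (prod_range_factorial_mul_prod_range_factorial m)
  have hcond := pochhammerMatrix_condensation b m k (x + 1)
  rw [add_right_comm x 1 2] at hcond
  simp only [← prod_factorial_mul_det_binomialMatrix] at hcond
  simp only [nsmul_eq_mul]
  push_cast at hcond hfactorials ⊢
  linear_combination hcond -
    (binomialMatrix b (m + 2) k x).det * (binomialMatrix b m k (x + 2)).det * hfactorials

end Binomial

theorem binomQ_eq_choose (y : ℚ[X]) (m : ℕ) : binomQ y m = Ring.choose y m := by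
  rw [binomQ, prod_range_sub_natCast_eq_factorial_mul_choose, ← mul_assoc,
    ← map_natCast Polynomial.C, ← map_mul,
    inv_mul_cancel₀ (Nat.cast_ne_zero.mpr m.factorial_ne_zero), map_one, one_mul]

theorem dd_eq_det_binomialMatrix (n : ℕ) (k c : ℤ) :
    dd n k c = (binomialMatrix aQ n k (LaurentPolynomial.C Polynomial.X + (c : RQ))).det := by
  have map_argument (i j : ℕ) : LaurentPolynomial.C
      (Polynomial.X + Polynomial.C (c : ℚ) + (i : ℚ[X]) + (j : ℚ[X])) =
      LaurentPolynomial.C Polynomial.X + (c : RQ) + (i : RQ) + (j : RQ) := by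
    rw [map_add, map_add, map_add, map_natCast, map_natCast, map_intCast, map_intCast]
  refine congrArg det (ext fun i j ↦ ?_)
  rw [Dmat, binomialMatrix, of_apply, of_apply, binomQ_eq_choose, Ring.map_choose,
    map_argument]

/-- condensation identity, n = m+2 ≥ 2: (n-1)·d_{n,k}(x,q)·d_{n-2,k}(x+2,q)
= (x+n)·d_{n-1,k}(x,q)·d_{n-1,k}(x+2,q) - (x+1)·d_{n-1,k+1}(x+1,q)·d_{n-1,k-1}(x+1,q). -/
theorem statement2 (m : ℕ) (k : ℤ) :
    ((m : RQ) + 1) * dd (m + 2) k 0 * dd m k 2 =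
      LaurentPolynomial.C (Polynomial.X + ((m + 2 : ℕ) : Polynomial ℚ))
          * dd (m + 1) k 0 * dd (m + 1) k 2
        - LaurentPolynomial.C (Polynomial.X + 1)
          * dd (m + 1) (k + 1) 1 * dd (m + 1) (k - 1) 1 := by
  simpa only [dd_eq_det_binomialMatrix, map_add, map_natCast, map_one, Int.cast_zero, Int.cast_one,
    Int.cast_ofNat, add_zero] using statement2_general aQ m k (LaurentPolynomial.C Polynomial.X)

end
end

section
/- For every positive integer n and every integer k there exists a (necessarily unique) polynomial f_{n,k}(x,q) ∈ ℚ[x,q] such that, in ℚ[x][q,q⁻¹], d_{n,k}(x,q) = q^{c(n,k)}·p_{n,k}(x)·f_{n,k}(x,q). In particular, q^{−c(n,k)}·d_{n,k}(x,q) involves no negative powers of q and is divisible in ℚ[x,q] by p_{n,k}(x). -/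
open Polynomial LaurentPolynomial Finset

noncomputable section

/-- The exponent c(n,k): 0 if k > 0 and n ≤ k; nk if k < 0 and n ≤ -k;
-∑_{i=1}^{n-k}⌊i/2⌋ otherwise. -/
def cExp (n : ℕ) (k : ℤ) : ℤ :=
  if 0 < k ∧ (n : ℤ) ≤ k then 0
  else if k < 0 ∧ (n : ℤ) ≤ -k then (n : ℤ) * k
  else -((∑ i ∈ Finset.range ((n : ℤ) - k).toNat, ((i + 1) / 2) : ℕ) : ℤ)

/-- p_{n,k}(x) = ∏_{i=1}^{n-1}(⌊i/2⌋!/i!) · ∏_{i=0}^{⌊(n-|k|-1)/2⌋}(x+|k|+2i+1),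
the second product (with ⌊(n-|k|+1)/2⌋ factors) being empty if n-|k|-1 < 0. -/
noncomputable def pPoly (n : ℕ) (k : ℤ) : Polynomial ℚ :=
  Polynomial.C (∏ i ∈ Finset.range (n - 1),
      (((i + 1) / 2).factorial : ℚ) / ((i + 1).factorial : ℚ)) *
  ∏ i ∈ Finset.range ((n - k.natAbs + 1) / 2),
    (Polynomial.X + Polynomial.C ((k.natAbs : ℚ) + 2 * i + 1))

/-!
A power `q ^ r i` multiplied into each row `i` and a power `q ^ s j` multiplied into each column `j`
clear all negative powers of `q` in `D_{n,k}`, as soon as `r i + s j` is at least `0` and at least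
`i - j - k`. The cheapest weights of this kind have total `-c(n,k)`, so `q ^ (-c(n,k)) * d_{n,k}` is
a polynomial `g` in `q`. When `x = -(|k| + 2 i + 1)` is one of the roots of `p_{n,k}`, the matrix
has a block of zeros too large for its determinant to be nonzero: a binomial coefficient vanishes
at all entries of the block except its corner, and there `a_0 = 0`. Hence every coefficient of `g`
vanishes at these roots, and `p_{n,k}` divides `g`.
-/

/-- The subring `R[q]` of `R[q, q⁻¹]`, with `q = T 1`: the Laurent polynomials that involve no
negative powers of `q`. -/
abbrev polynomialSubring (R : Type*) [Ring R] : Subring R[T;T⁻¹] :=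
  (toLaurent : R[X] →+* R[T;T⁻¹]).range

lemma T_mem_polynomialSubring {R : Type*} [Ring R] {z : ℤ} (hz : 0 ≤ z) :
    (T z : R[T;T⁻¹]) ∈ polynomialSubring R := by
  lift z to ℕ using hz
  exact ⟨X ^ z, toLaurent_X_pow z⟩

lemma T_sum {R ι : Type*} [CommSemiring R] (s : Finset ι) (r : ι → ℤ) :
    (T (∑ i ∈ s, r i) : R[T;T⁻¹]) = ∏ i ∈ s, T (r i) := by
  simp only [T, AddMonoidAlgebra.prod_single, prod_const_one]

lemma mapRingHom_toLaurent {R S : Type*} [Semiring R] [Semiring S] (f : R →+* S) (g : R[X]) :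
    AddMonoidAlgebra.mapRingHom ℤ f (toLaurent g) = toLaurent (g.map f) := by
  have hcomp : (AddMonoidAlgebra.mapRingHom ℤ f).comp toLaurent =
      (toLaurent : S[X] →+* S[T;T⁻¹]).comp (mapRingHom f) := by
    ext <;> simp [apply_ite f]
  exact RingHom.congr_fun hcomp g

lemma prod_X_sub_C_dvd_of_isRoot {R ι : Type*} [CommRing R] [IsDomain R] {s : Finset ι}
    {a : ι → R} (ha : Set.InjOn a s) {p : R[X]} (hp : ∀ i ∈ s, p.IsRoot (a i)) :
    ∏ i ∈ s, (X - Polynomial.C (a i)) ∣ p := by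
  obtain rfl | hp₀ := eq_or_ne p 0
  · exact dvd_zero _
  have hle : s.val.map a ≤ p.roots := by
    rw [Multiset.le_iff_subset (s.nodup.map_on fun _ hi _ hj h => ha hi hj h)]
    intro r hr
    obtain ⟨i, hi, rfl⟩ := Multiset.mem_map.mp hr
    exact (mem_roots hp₀).mpr (hp i hi)
  simpa only [prod_eq_multiset_prod, Multiset.map_map, Function.comp_def] using
    (Multiset.prod_X_sub_C_dvd_iff_le_roots hp₀ _).mpr hle

lemma C_prod_X_sub_C_dvd_of_map_eq_zero {R ι : Type*} [CommRing R] [IsDomain R] {s : Finset ι}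
    {a : ι → R} (ha : Set.InjOn a s) {g : R[X][X]}
    (hg : ∀ i ∈ s, g.map (evalRingHom (a i)) = 0) :
    Polynomial.C (∏ i ∈ s, (X - Polynomial.C (a i))) ∣ g :=
  (C_dvd_iff_dvd_coeff _ _).mpr fun m => prod_X_sub_C_dvd_of_isRoot ha fun i hi => by
    simpa using congrArg (fun p => p.coeff m) (hg i hi)

section Determinant

variable {R ι : Type*} [CommRing R] [Fintype ι] [DecidableEq ι]

lemma det_mem_of_forall_mem (S : Subring R) {M : Matrix ι ι R} (hM : ∀ i j, M i j ∈ S) :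
    M.det ∈ S := by
  rw [Matrix.det_apply]
  exact sum_mem fun σ _ => zsmul_mem (prod_mem fun i _ => hM _ _) _

lemma T_sum_mul_det (M : Matrix ι ι R[T;T⁻¹]) (r s : ι → ℤ) :
    T (∑ i, (r i + s i)) * M.det = (Matrix.of fun i j => T (r i + s j) * M i j).det := by
  have hscale : (Matrix.of fun i j => T (r i + s j) * M i j) =
      Matrix.diagonal (fun i => T (r i)) * M * Matrix.diagonal fun j => T (s j) := by
    ext1 i j
    rw [Matrix.mul_diagonal, Matrix.diagonal_mul, Matrix.of_apply, T_add]
    ring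
  rw [hscale, Matrix.det_mul, Matrix.det_mul, Matrix.det_diagonal, Matrix.det_diagonal,
    sum_add_distrib, T_add, T_sum, T_sum]
  ring

lemma det_eq_zero_of_zero_block {M : Matrix ι ι R} {I J : Finset ι} (hcard : #J < #I)
    (hM : ∀ i ∈ I, ∀ j ∉ J, M i j = 0) : M.det = 0 := by
  rw [Matrix.det_apply]
  refine sum_eq_zero fun σ _ => ?_
  obtain ⟨j, hjI, hjJ⟩ : ∃ j ∈ I.map σ.symm.toEmbedding, j ∉ J :=
    exists_mem_notMem_of_card_lt_card (by rwa [card_map])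
  have hσj : σ j ∈ I := by simpa using hjI
  rw [prod_eq_zero (f := fun j => M (σ j) j) (mem_univ j) (hM _ hσj j hjJ), smul_zero]

end Determinant

lemma sum_range_succ_div_two (N : ℕ) :
    ∑ i ∈ range N, (i + 1) / 2 = N / 2 * ((N + 1) / 2) := by
  induction N with
  | zero => rfl
  | succ N ih =>
    rw [sum_range_succ, ih, show (N + 1 + 1) / 2 = N / 2 + 1 from Nat.add_div_right N two_pos]
    ring

lemma two_mul_sum_range_max_sub (n : ℕ) {t : ℤ} (ht : -1 ≤ t) :
    2 * ∑ i ∈ range n, max 0 ((i : ℤ) - t) = max 0 (n - t) * (n - t - 1) := by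
  induction n with
  | zero =>
    obtain rfl | ht := ht.eq_or_lt
    · simp
    · simp [show 0 ≤ t by omega]
  | succ n ih =>
    rw [sum_range_succ, mul_add, ih]
    push_cast
    obtain h | h := le_or_gt ((n : ℤ) - t) 0
    · obtain h' | h' := h.eq_or_lt
      · simp [show (n : ℤ) = t by omega]
      · rw [max_eq_left h, max_eq_left (by omega)]
        ring
    · rw [max_eq_right h.le, max_eq_right (by omega)]
      ring

lemma two_mul_sum_range_max_rsub {n : ℕ} {b : ℤ} (hb : b ≤ n) :
    2 * ∑ j ∈ range n, max 0 (b - (j : ℤ)) = max 0 (b + 1) * b := by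
  have hreflect : ∑ j ∈ range n, max 0 (b - (j : ℤ)) =
      ∑ i ∈ range n, max 0 ((i : ℤ) - (n - 1 - b)) := by
    rw [← sum_range_reflect]
    refine sum_congr rfl fun i hi => ?_
    have := mem_range.mp hi
    congr 1
    omega
  rw [hreflect, two_mul_sum_range_max_sub n (by omega)]
  ring_nf

/-- The cut-off `h` of the weights `(i - k - h)⁺` of row `i` and `(h - j)⁺` of column `j` of
`D_{n,k}`, with indices starting at `0`: the point of `[0, n]` nearest to `⌊(n - k) / 2⌋`, where
the total weight is least. -/
def weightThreshold (n : ℕ) (k : ℤ) : ℤ := max 0 (min n ((n - k) / 2))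

/-- The exponent `(i - k - h)⁺` of the power of `q` by which row `i` of `D_{n,k}` is scaled. -/
def rowWeight (n : ℕ) (k : ℤ) (i : ℕ) : ℤ := max 0 (i - (k + weightThreshold n k))

/-- The exponent `(h - j)⁺` of the power of `q` by which column `j` of `D_{n,k}` is scaled. -/
def colWeight (n : ℕ) (k : ℤ) (j : ℕ) : ℤ := max 0 (weightThreshold n k - j)

lemma sum_rowWeight_add_colWeight (n : ℕ) (k : ℤ) :
    ∑ i ∈ range n, (rowWeight n k i + colWeight n k i) = -cExp n k := by
  unfold cExp
  split_ifs with hpos hneg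
  · refine sum_eq_zero fun i hi => ?_
    have := mem_range.mp hi
    unfold rowWeight colWeight weightThreshold
    omega
  · have hterm : ∀ i ∈ range n, rowWeight n k i + colWeight n k i = -k := fun i hi => by
      have := mem_range.mp hi
      unfold rowWeight colWeight weightThreshold
      omega
    rw [sum_congr rfl hterm, sum_const, card_range, nsmul_eq_mul, mul_neg]
  · obtain ⟨N, hN⟩ : ∃ N : ℕ, (n : ℤ) - k = N := ⟨((n : ℤ) - k).toNat, by omega⟩
    have hthreshold : weightThreshold n k = (N / 2 : ℕ) := by unfold weightThreshold; omega
    have hceil : (((N + 1) / 2 : ℕ) : ℤ) = N - (N / 2 : ℕ) := by omega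
    have hrow := two_mul_sum_range_max_sub n (t := k + (N / 2 : ℕ)) (by omega)
    have hcol := two_mul_sum_range_max_rsub (n := n) (b := (N / 2 : ℕ)) (by omega)
    rw [← sub_sub, hN, max_eq_right (by omega)] at hrow
    rw [max_eq_right (by omega)] at hcol
    simp only [rowWeight, colWeight, hthreshold]
    rw [hN, Int.toNat_natCast, sum_range_succ_div_two, neg_neg, sum_add_distrib,
      Nat.cast_mul, hceil]
    obtain hparity | hparity :
        (N : ℤ) - (N / 2 : ℕ) = (N / 2 : ℕ) ∨ (N : ℤ) - (N / 2 : ℕ) = (N / 2 : ℕ) + 1 := by omega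
    all_goals
      rw [hparity] at hrow ⊢
      linarith

lemma T_mul_aQ_mem_polynomialSubring {m e : ℤ} (he : 0 ≤ e) (hem : 0 ≤ e + m) :
    T e * aQ m ∈ polynomialSubring ℚ[X] := by
  have hterm (d : ℕ) {z : ℤ} (hz : 0 ≤ e + z) :
      T e * ((-1 : RQ) ^ d * T z) ∈ polynomialSubring ℚ[X] := by
    rw [mul_left_comm, ← T_add]
    exact mul_mem (pow_mem (neg_mem (one_mem _)) d) (T_mem_polynomialSubring hz)
  unfold aQ
  split_ifs with h
  · rw [mul_sum]
    exact sum_mem fun l _ => hterm l (by omega)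
  · rw [mul_neg (T e : RQ), mul_sum]
    refine neg_mem (sum_mem fun l hl => hterm (l + 1) ?_)
    have := mem_range.mp hl
    omega

lemma T_neg_cExp_mul_dd_mem_polynomialSubring (n : ℕ) (k c : ℤ) :
    T (-cExp n k) * dd n k c ∈ polynomialSubring ℚ[X] := by
  rw [← sum_rowWeight_add_colWeight, sum_range, dd,
    T_sum_mul_det _ (fun i : Fin n => rowWeight n k i) (fun j : Fin n => colWeight n k j)]
  refine det_mem_of_forall_mem _ fun i j => ?_
  rw [Matrix.of_apply, Dmat, Matrix.of_apply, mul_left_comm]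
  refine mul_mem ⟨_, toLaurent_C _⟩ (T_mul_aQ_mem_polynomialSubring ?_ ?_) <;>
  · unfold rowWeight colWeight
    omega

lemma eval_binomQ_eq_zero {y : ℚ[X]} {m t : ℕ} {a : ℚ} (ht : t < m) (hy : y.eval a = t) :
    (binomQ y m).eval a = 0 := by
  rw [binomQ, eval_mul, eval_prod]
  refine mul_eq_zero_of_right _ (prod_eq_zero (mem_range.mpr ht) ?_)
  rw [eval_sub, hy, eval_natCast, sub_self]

lemma aQ_zero : aQ 0 = 0 := by simp [aQ]

/-- At `x + c = -(a + b + 1)` rows `a, …, a + b` vanish outside the first `b` columns: the binomial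
coefficient is zero if `i + j > a + b`, and otherwise `(i, j) = (a, b)`, where `a_0 = 0`. -/
lemma mapRingHom_dd_eq_zero {n a b : ℕ} (hab : a + b < n) (c : ℤ) :
    AddMonoidAlgebra.mapRingHom ℤ (evalRingHom (-(a + b + 1 + c : ℚ))) (dd n (a - b) c) = 0 := by
  rw [dd, RingHom.map_det]
  refine det_eq_zero_of_zero_block (I := Icc ⟨a, by omega⟩ ⟨a + b, hab⟩)
    (J := Iio ⟨b, by omega⟩) (by rw [Fin.card_Iio, Fin.card_Icc]; grind) fun i hi j hj => ?_
  obtain ⟨hai, hib⟩ : a ≤ i ∧ (i : ℕ) ≤ a + b := by simpa [Fin.le_def] using hi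
  have hbj : b ≤ j := by simpa [Fin.lt_def] using hj
  rw [RingHom.mapMatrix_apply, Matrix.map_apply, Dmat, Matrix.of_apply]
  obtain hlt | hge := lt_or_ge (i + j : ℕ) (a + b + 1)
  · rw [show ((j : ℕ) : ℤ) - (i : ℕ) + (a - b) = 0 by omega, aQ_zero, mul_zero, map_zero]
  · obtain ⟨t, ht⟩ := Nat.exists_eq_add_of_le hge
    rw [map_mul, ← toLaurent_C, mapRingHom_toLaurent, Polynomial.map_C, coe_evalRingHom,
      eval_binomQ_eq_zero (t := t) (by omega), Polynomial.C_0, map_zero, zero_mul]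
    have ht' : (i + j : ℚ) = a + b + 1 + t := by exact_mod_cast ht
    simp only [map_intCast, eval_add, eval_X, eval_intCast, eval_natCast]
    linarith

lemma associated_prod_pPoly (n : ℕ) (k : ℤ) :
    Associated (∏ i ∈ range ((n - k.natAbs + 1) / 2),
      (X - Polynomial.C (-(k.natAbs + 2 * i + 1 : ℚ)))) (pPoly n k) := by
  have hconst : (∏ i ∈ range (n - 1),
      (((i + 1) / 2).factorial : ℚ) / ((i + 1).factorial : ℚ)) ≠ 0 :=
    prod_ne_zero_iff.mpr fun i _ => by positivity
  simp only [pPoly, Polynomial.C_neg, sub_neg_eq_add]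
  exact associated_unit_mul_right _ _ (isUnit_C.mpr hconst.isUnit)

lemma pPoly_ne_zero (n : ℕ) (k : ℤ) : pPoly n k ≠ 0 :=
  (associated_prod_pPoly n k).ne_zero_iff.mp (prod_ne_zero_iff.mpr fun _ _ => X_sub_C_ne_zero _)

lemma C_pPoly_dvd {n : ℕ} {k : ℤ} {g : ℚ[X][X]} (hg : ∀ i < (n - k.natAbs + 1) / 2,
    g.map (evalRingHom (-(k.natAbs + 2 * i + 1 : ℚ))) = 0) : Polynomial.C (pPoly n k) ∣ g := by
  have hinj : Function.Injective fun i : ℕ => (-(k.natAbs + 2 * i + 1) : ℚ) := fun i j hij => by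
    simpa using hij
  exact ((associated_prod_pPoly n k).map Polynomial.C).dvd_iff_dvd_left.mp
    (C_prod_X_sub_C_dvd_of_map_eq_zero hinj.injOn fun i hi => hg i (mem_range.mp hi))

lemma mapRingHom_dd_eq_zero_of_lt {n : ℕ} {k : ℤ} {i : ℕ} (hi : i < (n - k.natAbs + 1) / 2) :
    AddMonoidAlgebra.mapRingHom ℤ (evalRingHom (-(k.natAbs + 2 * i + 1 : ℚ))) (dd n k 0) = 0 := by
  have h := mapRingHom_dd_eq_zero (n := n) (a := k.toNat + i) (b := (-k).toNat + i) (by omega) 0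
  have hk : ((k.toNat + i : ℕ) : ℤ) - ((-k).toNat + i : ℕ) = k := by omega
  have hroot : (((k.toNat + i : ℕ) : ℚ) + ((-k).toNat + i : ℕ) + 1 + (0 : ℤ)) =
      k.natAbs + 2 * i + 1 := by
    have : (k.toNat + i) + ((-k).toNat + i) + 1 = k.natAbs + 2 * i + 1 := by omega
    rw [Int.cast_zero, add_zero]
    exact_mod_cast this
  rwa [hk, hroot] at h

/-- for every positive n and integer k there is a unique polynomial
f_{n,k}(x,q) ∈ ℚ[x][q] with d_{n,k}(x,q) = q^{c(n,k)}·p_{n,k}(x)·f_{n,k}(x,q)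
in ℚ[x][q,q⁻¹]. -/
theorem statement6 (n : ℕ) (hn : 1 ≤ n) (k : ℤ) :
    ∃! f : Polynomial (Polynomial ℚ),
      dd n k 0 = LaurentPolynomial.T (cExp n k) * LaurentPolynomial.C (pPoly n k) *
        Polynomial.toLaurent f := by
  obtain ⟨g, hg⟩ := T_neg_cExp_mul_dd_mem_polynomialSubring n k 0
  have hdvd : Polynomial.C (pPoly n k) ∣ g := by
    refine C_pPoly_dvd fun i hi => toLaurent_injective ?_
    rw [← mapRingHom_toLaurent, hg, map_mul, mapRingHom_dd_eq_zero_of_lt hi, mul_zero, map_zero]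
  obtain ⟨f, rfl⟩ := hdvd
  have hf : dd n k 0 = T (cExp n k) * LaurentPolynomial.C (pPoly n k) * toLaurent f := by
    rw [mul_assoc, ← toLaurent_C, ← map_mul, hg, ← mul_assoc, ← T_add, add_neg_cancel, T_zero,
      one_mul]
  have hne : (T (cExp n k) * LaurentPolynomial.C (pPoly n k) : RQ) ≠ 0 := by
    rw [← toLaurent_C]
    exact mul_ne_zero (isUnit_T _).ne_zero
      (toLaurent_ne_zero.mpr (Polynomial.C_ne_zero.mpr (pPoly_ne_zero n k)))
  exact ⟨f, hf, fun f' hf' =>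
    toLaurent_injective (mul_left_cancel₀ hne (hf'.symm.trans hf))⟩

end
end
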